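/- Soundness of the syntactic assignment rule (AssignS): for every program variable x, every syntactic program expression e with semantic interpretation ⟦e⟧ : PStates → PVals, and every closed syntactic hyper-assertion A, the hyper-triple ⊨ {A^e_x} (x := ⟦e⟧) {A} is valid, where A^e_x denotes the syntactic hyper-assertion obtained from A by, under each state quantifier binding a state variable φ, recursively replacing every lookup φ^P(x) by the hyper-expression e[φ] (the instantiation of e in which every program-variable lookup x' is read as φ^P(x')), and each syntactic hyper-assertion is interpreted as the hyper-assertion λS. (S satisfies it). -/

import Mathlib

/-- Commands of the programming language. -/
inductive Cmd (PVar PVal : Type) : Type where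
  | skip : Cmd PVar PVal
  | assign : PVar → ((PVar → PVal) → PVal) → Cmd PVar PVal
  | havoc : PVar → Cmd PVar PVal
  | assume : ((PVar → PVal) → Prop) → Cmd PVar PVal
  | seq : Cmd PVar PVal → Cmd PVar PVal → Cmd PVar PVal
  | choice : Cmd PVar PVal → Cmd PVar PVal → Cmd PVar PVal
  | iter : Cmd PVar PVal → Cmd PVar PVal

/-- Big-step semantics ⟨C, σ⟩ → σ'. -/
inductive BigStep {PVar PVal : Type} [DecidableEq PVar] :
    Cmd PVar PVal → (PVar → PVal) → (PVar → PVal) → Prop where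
  | skip (σ : PVar → PVal) : BigStep Cmd.skip σ σ
  | assign (x : PVar) (e : (PVar → PVal) → PVal) (σ : PVar → PVal) :
      BigStep (Cmd.assign x e) σ (Function.update σ x (e σ))
  | havoc (x : PVar) (σ : PVar → PVal) (v : PVal) :
      BigStep (Cmd.havoc x) σ (Function.update σ x v)
  | assume {b : (PVar → PVal) → Prop} {σ : PVar → PVal} (h : b σ) :
      BigStep (Cmd.assume b) σ σ
  | seq {C1 C2 : Cmd PVar PVal} {σ σ' σ'' : PVar → PVal} :
      BigStep C1 σ σ' → BigStep C2 σ' σ'' → BigStep (Cmd.seq C1 C2) σ σ''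
  | choiceL {C1 C2 : Cmd PVar PVal} {σ σ' : PVar → PVal} :
      BigStep C1 σ σ' → BigStep (Cmd.choice C1 C2) σ σ'
  | choiceR {C1 C2 : Cmd PVar PVal} {σ σ' : PVar → PVal} :
      BigStep C2 σ σ' → BigStep (Cmd.choice C1 C2) σ σ'
  | iterNil {C : Cmd PVar PVal} {σ : PVar → PVal} : BigStep (Cmd.iter C) σ σ
  | iterCons {C : Cmd PVar PVal} {σ σ' σ'' : PVar → PVal} :
      BigStep C σ σ' → BigStep (Cmd.iter C) σ' σ'' → BigStep (Cmd.iter C) σ σ''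

/-- Extended states: a logical state paired with a program state. -/
abbrev EState (PVar PVal LVar LVal : Type) : Type :=
  (LVar → LVal) × (PVar → PVal)

/-- Extended semantics of a command on a set of extended states. -/
def sem {PVar PVal LVar LVal : Type} [DecidableEq PVar] (C : Cmd PVar PVal)
    (S : Set (EState PVar PVal LVar LVal)) : Set (EState PVar PVal LVar LVal) :=
  { φ | ∃ σ : PVar → PVal, (φ.1, σ) ∈ S ∧ BigStep C σ φ.2 }

/-- Hyper-assertions: predicates over sets of extended states. -/
abbrev HAssn (PVar PVal LVar LVal : Type) : Type :=
  Set (EState PVar PVal LVar LVal) → Prop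

/-- Validity of a hyper-triple ⊨ {P} C {Q}. -/
def HyperTriple {PVar PVal LVar LVal : Type} [DecidableEq PVar]
    (P : HAssn PVar PVal LVar LVal) (C : Cmd PVar PVal)
    (Q : HAssn PVar PVal LVar LVal) : Prop :=
  ∀ S : Set (EState PVar PVal LVar LVal), P S → Q (sem C S)

/-- Syntactic program expressions (constants, program-variable lookups, binary
operations, unary function applications). Program and logical values are drawn
from a single type `Val`. -/
inductive PExp (PVar Val : Type) : Type where
  | const : Val → PExp PVar Val
  | var : PVar → PExp PVar Val
  | binop : (Val → Val → Val) → PExp PVar Val → PExp PVar Val → PExp PVar Val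
  | fn : (Val → Val) → PExp PVar Val → PExp PVar Val

/-- Semantic interpretation ⟦e⟧ of a syntactic program expression. -/
def PExp.eval {PVar Val : Type} (σ : PVar → Val) : PExp PVar Val → Val
  | .const v => v
  | .var x => σ x
  | .binop op e1 e2 => op (PExp.eval σ e1) (PExp.eval σ e2)
  | .fn f e => f (PExp.eval σ e)

/-- Syntactic hyper-expressions: constants, program-variable lookups φ^P(x) and
logical-variable lookups φ^L(x) (state variables are names in ℕ), binary operations
and unary function applications. Bound values are represented as constants. -/
inductive HExp (PVar LVar Val : Type) : Type where
  | const : Val → HExp PVar LVar Val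
  | pvar : ℕ → PVar → HExp PVar LVar Val
  | lvar : ℕ → LVar → HExp PVar LVar Val
  | binop : (Val → Val → Val) → HExp PVar LVar Val → HExp PVar LVar Val → HExp PVar LVar Val
  | fn : (Val → Val) → HExp PVar LVar Val → HExp PVar LVar Val

/-- Evaluation of a hyper-expression under an environment for state variables. -/
def HExp.eval {PVar LVar Val : Type} (env : ℕ → EState PVar Val LVar Val) :
    HExp PVar LVar Val → Val
  | .const v => v
  | .pvar n x => (env n).2 x
  | .lvar n x => (env n).1 x
  | .binop op e1 e2 => op (HExp.eval env e1) (HExp.eval env e2)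
  | .fn f e => f (HExp.eval env e)

/-- Syntactic hyper-assertions: Boolean constants, comparisons of hyper-expressions,
conjunction, disjunction, value quantifiers (binding represented by Lean functions)
and state quantifiers (binding state-variable names in ℕ). -/
inductive HAssrt (PVar LVar Val : Type) : Type where
  | bconst : Prop → HAssrt PVar LVar Val
  | comp : (Val → Val → Prop) → HExp PVar LVar Val → HExp PVar LVar Val → HAssrt PVar LVar Val
  | conj : HAssrt PVar LVar Val → HAssrt PVar LVar Val → HAssrt PVar LVar Val
  | disj : HAssrt PVar LVar Val → HAssrt PVar LVar Val → HAssrt PVar LVar Val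
  | forallV : (Val → HAssrt PVar LVar Val) → HAssrt PVar LVar Val
  | existsV : (Val → HAssrt PVar LVar Val) → HAssrt PVar LVar Val
  | forallS : ℕ → HAssrt PVar LVar Val → HAssrt PVar LVar Val
  | existsS : ℕ → HAssrt PVar LVar Val → HAssrt PVar LVar Val

/-- Satisfaction of a syntactic hyper-assertion by a set S of extended states,
relative to an environment for state variables. State quantifiers range over S. -/
def HAssrt.sat {PVar LVar Val : Type} (S : Set (EState PVar Val LVar Val))
    (env : ℕ → EState PVar Val LVar Val) : HAssrt PVar LVar Val → Prop
  | .bconst b => b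
  | .comp r e1 e2 => r (HExp.eval env e1) (HExp.eval env e2)
  | .conj A B => HAssrt.sat S env A ∧ HAssrt.sat S env B
  | .disj A B => HAssrt.sat S env A ∨ HAssrt.sat S env B
  | .forallV body => ∀ v : Val, HAssrt.sat S env (body v)
  | .existsV body => ∃ v : Val, HAssrt.sat S env (body v)
  | .forallS n A => ∀ α ∈ S, HAssrt.sat S (Function.update env n α) A
  | .existsS n A => ∃ α ∈ S, HAssrt.sat S (Function.update env n α) A

/-- Free state variables of a hyper-expression. -/
def HExp.fsv {PVar LVar Val : Type} : HExp PVar LVar Val → Set ℕ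
  | .const _ => ∅
  | .pvar n _ => {n}
  | .lvar n _ => {n}
  | .binop _ e1 e2 => HExp.fsv e1 ∪ HExp.fsv e2
  | .fn _ e => HExp.fsv e

/-- Free state variables of a syntactic hyper-assertion. -/
def HAssrt.fsv {PVar LVar Val : Type} : HAssrt PVar LVar Val → Set ℕ
  | .bconst _ => ∅
  | .comp _ e1 e2 => HExp.fsv e1 ∪ HExp.fsv e2
  | .conj A B => HAssrt.fsv A ∪ HAssrt.fsv B
  | .disj A B => HAssrt.fsv A ∪ HAssrt.fsv B
  | .forallV body => ⋃ v, HAssrt.fsv (body v)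
  | .existsV body => ⋃ v, HAssrt.fsv (body v)
  | .forallS n A => HAssrt.fsv A \ {n}
  | .existsS n A => HAssrt.fsv A \ {n}

/-- A syntactic hyper-assertion is closed iff it has no free state variables. -/
def HAssrt.Closed {PVar LVar Val : Type} (A : HAssrt PVar LVar Val) : Prop :=
  HAssrt.fsv A = ∅

/-- The instantiation e[φ] of a program expression at the state variable n: every
program-variable lookup x' is read as φ^P(x'). -/
def PExp.atState {PVar LVar Val : Type} (n : ℕ) : PExp PVar Val → HExp PVar LVar Val
  | .const v => .const v
  | .var x => .pvar n x
  | .binop op e1 e2 => .binop op (PExp.atState n e1) (PExp.atState n e2)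
  | .fn f e => .fn f (PExp.atState n e)

/-- Substitution, in a hyper-expression, of every lookup φ^P(x) by e[φ], for every
state variable φ. -/
def HExp.substAssign {PVar LVar Val : Type} [DecidableEq PVar]
    (x : PVar) (e : PExp PVar Val) : HExp PVar LVar Val → HExp PVar LVar Val
  | .const v => .const v
  | .pvar n x' => if x' = x then PExp.atState n e else .pvar n x'
  | .lvar n y => .lvar n y
  | .binop op e1 e2 => .binop op (HExp.substAssign x e e1) (HExp.substAssign x e e2)
  | .fn f e' => .fn f (HExp.substAssign x e e')

/-- The syntactic transformation A^e_x: under each state quantifier binding a state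
variable φ, every lookup φ^P(x) is replaced by e[φ] (for a closed assertion this is
the simultaneous replacement of every lookup φ^P(x) by e[φ]). -/
def HAssrt.substAssign {PVar LVar Val : Type} [DecidableEq PVar]
    (x : PVar) (e : PExp PVar Val) : HAssrt PVar LVar Val → HAssrt PVar LVar Val
  | .bconst b => .bconst b
  | .comp r e1 e2 => .comp r (HExp.substAssign x e e1) (HExp.substAssign x e e2)
  | .conj A B => .conj (HAssrt.substAssign x e A) (HAssrt.substAssign x e B)
  | .disj A B => .disj (HAssrt.substAssign x e A) (HAssrt.substAssign x e B)
  | .forallV body => .forallV (fun v => HAssrt.substAssign x e (body v))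
  | .existsV body => .existsV (fun v => HAssrt.substAssign x e (body v))
  | .forallS n A => .forallS n (HAssrt.substAssign x e A)
  | .existsS n A => .existsS n (HAssrt.substAssign x e A)

/-!
The assignment `x := ⟦e⟧` is deterministic and total, so its extended semantics is the direct image
under a map `f` of extended states, and quantifying over the states after the assignment is
quantifying over `f α` for `α` among the states before it. On the syntactic side, replacing every
lookup `φ^P(x)` by `e[φ]` amounts to reading each state variable through `f`. Hence `A^e_x` holds of
`S` in `env` iff `A` holds of `f '' S` in `f ∘ env`; when `A` is closed, `f ∘ env` may be replaced
by `env`.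
-/

theorem eqOn_update_of_eqOn_diff_singleton {α β : Type*} [DecidableEq α] {f g : α → β} {s : Set α}
    {a : α} (h : Set.EqOn f g (s \ {a})) (b : β) :
    Set.EqOn (Function.update f a b) (Function.update g a b) s := by
  intro c hc
  obtain rfl | hca := eq_or_ne c a
  · simp only [Function.update_self]
  · simpa only [Function.update_of_ne hca] using h ⟨hc, hca⟩

/-- The effect of the assignment `x := f` on a single extended state: the program variable `x` is
overwritten and the logical state is kept. -/
def EState.assign {PVar PVal LVar LVal : Type} [DecidableEq PVar] (x : PVar)
    (f : (PVar → PVal) → PVal) (φ : EState PVar PVal LVar LVal) : EState PVar PVal LVar LVal :=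
  (φ.1, Function.update φ.2 x (f φ.2))

theorem bigStep_assign_iff {PVar PVal : Type} [DecidableEq PVar] {x : PVar}
    {f : (PVar → PVal) → PVal} {σ σ' : PVar → PVal} :
    BigStep (Cmd.assign x f) σ σ' ↔ σ' = Function.update σ x (f σ) := by
  constructor
  · rintro ⟨⟩
    rfl
  · rintro rfl
    exact .assign x f σ

theorem sem_assign {PVar PVal LVar LVal : Type} [DecidableEq PVar] (x : PVar)
    (f : (PVar → PVal) → PVal) (S : Set (EState PVar PVal LVar LVal)) :
    sem (Cmd.assign x f) S = EState.assign x f '' S := by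
  ext φ
  constructor
  · rintro ⟨σ, hσ, hstep⟩
    exact ⟨(φ.1, σ), hσ, Prod.ext rfl (bigStep_assign_iff.1 hstep).symm⟩
  · rintro ⟨α, hα, rfl⟩
    exact ⟨α.2, hα, bigStep_assign_iff.2 rfl⟩

section Satisfaction

variable {PVar LVar Val : Type}

theorem HExp.eval_congr {env env' : ℕ → EState PVar Val LVar Val} {t : HExp PVar LVar Val}
    (h : Set.EqOn env env' t.fsv) : t.eval env = t.eval env' := by
  induction t with
  | const v => rfl
  | pvar n x => exact congrArg (fun φ => φ.2 x) (h rfl)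
  | lvar n x => exact congrArg (fun φ => φ.1 x) (h rfl)
  | binop op t₁ t₂ ih₁ ih₂ =>
    exact congrArg₂ op (ih₁ (h.mono Set.subset_union_left)) (ih₂ (h.mono Set.subset_union_right))
  | fn f t ih => exact congrArg f (ih h)

theorem HAssrt.sat_congr {S : Set (EState PVar Val LVar Val)}
    {env env' : ℕ → EState PVar Val LVar Val} {A : HAssrt PVar LVar Val}
    (h : Set.EqOn env env' A.fsv) : A.sat S env ↔ A.sat S env' := by
  induction A generalizing env env' with
  | bconst b => rfl
  | comp r t₁ t₂ =>
    exact iff_of_eq (congrArg₂ r (HExp.eval_congr (h.mono Set.subset_union_left))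
      (HExp.eval_congr (h.mono Set.subset_union_right)))
  | conj A B ihA ihB =>
    exact and_congr (ihA (h.mono Set.subset_union_left)) (ihB (h.mono Set.subset_union_right))
  | disj A B ihA ihB =>
    exact or_congr (ihA (h.mono Set.subset_union_left)) (ihB (h.mono Set.subset_union_right))
  | forallV body ih =>
    exact forall_congr' fun v => ih v (h.mono (Set.subset_iUnion (fun w => (body w).fsv) v))
  | existsV body ih =>
    exact exists_congr fun v => ih v (h.mono (Set.subset_iUnion (fun w => (body w).fsv) v))
  | forallS n A ih =>
    exact forall₂_congr fun α _ => ih (eqOn_update_of_eqOn_diff_singleton h α)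
  | existsS n A ih =>
    exact exists_congr fun α => and_congr_right' (ih (eqOn_update_of_eqOn_diff_singleton h α))

theorem HAssrt.Closed.sat_iff {A : HAssrt PVar LVar Val} (hA : A.Closed)
    (S : Set (EState PVar Val LVar Val)) (env env' : ℕ → EState PVar Val LVar Val) :
    A.sat S env ↔ A.sat S env' := by
  have hfsv : A.fsv = ∅ := hA
  exact HAssrt.sat_congr (hfsv ▸ Set.eqOn_empty env env')

theorem PExp.eval_atState (env : ℕ → EState PVar Val LVar Val) (n : ℕ) (e : PExp PVar Val) :
    (e.atState n).eval env = e.eval (env n).2 := by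
  induction e with
  | const v => rfl
  | var x => rfl
  | binop op e₁ e₂ ih₁ ih₂ => exact congrArg₂ op ih₁ ih₂
  | fn f e ih => exact congrArg f ih

variable [DecidableEq PVar]

theorem HExp.eval_substAssign (x : PVar) (e : PExp PVar Val)
    (env : ℕ → EState PVar Val LVar Val) (t : HExp PVar LVar Val) :
    (t.substAssign x e).eval env = t.eval (EState.assign x (fun σ => e.eval σ) ∘ env) := by
  induction t with
  | const v => rfl
  | pvar n y =>
    obtain rfl | hyx := eq_or_ne y x
    · simp [HExp.substAssign, HExp.eval, EState.assign, PExp.eval_atState]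
    · simp [HExp.substAssign, HExp.eval, EState.assign, hyx]
  | lvar n y => rfl
  | binop op t₁ t₂ ih₁ ih₂ => exact congrArg₂ op ih₁ ih₂
  | fn f t ih => exact congrArg f ih

theorem HAssrt.sat_substAssign (x : PVar) (e : PExp PVar Val)
    (S : Set (EState PVar Val LVar Val)) (env : ℕ → EState PVar Val LVar Val)
    (A : HAssrt PVar LVar Val) :
    (A.substAssign x e).sat S env ↔
      A.sat (EState.assign x (fun σ => e.eval σ) '' S)
        (EState.assign x (fun σ => e.eval σ) ∘ env) := by
  induction A generalizing env with
  | bconst b => rfl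
  | comp r t₁ t₂ =>
    exact iff_of_eq
      (congrArg₂ r (HExp.eval_substAssign x e env t₁) (HExp.eval_substAssign x e env t₂))
  | conj A B ihA ihB => exact and_congr (ihA env) (ihB env)
  | disj A B ihA ihB => exact or_congr (ihA env) (ihB env)
  | forallV body ih => exact forall_congr' fun v => ih v env
  | existsV body ih => exact exists_congr fun v => ih v env
  | forallS n A ih =>
    simp only [HAssrt.substAssign, HAssrt.sat, Set.forall_mem_image, ih, Function.comp_update]
  | existsS n A ih =>
    simp only [HAssrt.substAssign, HAssrt.sat, Set.exists_mem_image, ih, Function.comp_update]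

end Satisfaction

/-- Soundness of the syntactic assignment rule (AssignS):
⊨ {A^e_x} (x := ⟦e⟧) {A} for closed A. -/
theorem assignS_sound {PVar LVar Val : Type} [DecidableEq PVar]
    (x : PVar) (e : PExp PVar Val) (A : HAssrt PVar LVar Val)
    (hclosed : A.Closed) :
    ∀ env : ℕ → EState PVar Val LVar Val,
      HyperTriple
        (fun S => HAssrt.sat S env (HAssrt.substAssign x e A))
        (Cmd.assign x (fun σ => PExp.eval σ e))
        (fun S => HAssrt.sat S env A) := by
  intro env S hpre
  have hpost : A.sat (EState.assign x (fun σ => e.eval σ) '' S)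
      (EState.assign x (fun σ => e.eval σ) ∘ env) :=
    (HAssrt.sat_substAssign x e S env A).1 hpre
  rw [sem_assign]
  exact (hclosed.sat_iff _ _ env).1 hpost
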